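/- Let 𝒞 be a hereditary class of finite simple graphs all of whose members are interval graphs. Then 𝒞 has bounded twin-width if and only if there exist p ≥ 1 and a permutation π of {1,…,p} such that no graph in 𝒞 exposes π. -/

import Mathlib

open Finset

def IsHomog {V : Type} (G : SimpleGraph V) (A B : Finset V) : Prop :=
  (∀ a ∈ A, ∀ b ∈ B, G.Adj a b) ∨ (∀ a ∈ A, ∀ b ∈ B, ¬ G.Adj a b)

noncomputable def redDegree {V : Type} [Fintype V] [DecidableEq V] (G : SimpleGraph V)
    (P : Finpartition (univ : Finset V)) (A : Finset V) : ℕ :=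
  letI := Classical.decPred fun B : Finset V => ¬ IsHomog G A B
  ((P.parts.erase A).filter fun B => ¬ IsHomog G A B).card

def IsMerge {V : Type} [Fintype V] [DecidableEq V]
    (P Q : Finpartition (univ : Finset V)) : Prop :=
  ∃ A ∈ P.parts, ∃ B ∈ P.parts, A ≠ B ∧
    Q.parts = insert (A ∪ B) ((P.parts.erase A).erase B)

def TwinWidthLE {V : Type} [Fintype V] [DecidableEq V] (G : SimpleGraph V) (d : ℕ) : Prop :=
  ∃ L : List (Finpartition (univ : Finset V)),
    (∃ P₀, L.head? = some P₀ ∧ ∀ A ∈ P₀.parts, A.card = 1) ∧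
    (∃ P₁, L.getLast? = some P₁ ∧ P₁.parts.card ≤ 1) ∧
    List.Chain' IsMerge L ∧
    ∀ P ∈ L, ∀ A ∈ P.parts, redDegree G P A ≤ d

/-- `G` is an interval graph: vertices carry closed rational intervals, and
distinct vertices are adjacent iff their intervals intersect. -/
def IsIntervalGraph {n : ℕ} (G : SimpleGraph (Fin n)) : Prop :=
  ∃ l r : Fin n → ℚ, (∀ v, l v ≤ r v) ∧
    ∀ u v : Fin n, u ≠ v →
      (G.Adj u v ↔ max (l u) (l v) ≤ min (r u) (r v))

/-- The graph `H` exposes the permutation `π` of `{0, …, p-1}`: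
its vertex set partitions into `W = range w`, `W₁ = range w₁`, `W₂ = range w₂`
(each of size `p`) such that the neighborhoods of the `w i` in `W₁` are
nonempty and strictly increasing along `i`, and the neighborhoods in `W₂` are
nonempty and strictly increasing along `π`. -/
def Exposes {V : Type} {p : ℕ} (H : SimpleGraph V) (π : Equiv.Perm (Fin p)) : Prop :=
  ∃ w w₁ w₂ : Fin p → V,
    Function.Injective w ∧ Function.Injective w₁ ∧ Function.Injective w₂ ∧
    Disjoint (Set.range w) (Set.range w₁) ∧
    Disjoint (Set.range w) (Set.range w₂) ∧
    Disjoint (Set.range w₁) (Set.range w₂) ∧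
    Set.range w ∪ Set.range w₁ ∪ Set.range w₂ = Set.univ ∧
    (∀ i, (H.neighborSet (w i) ∩ Set.range w₁).Nonempty) ∧
    (∀ i, (H.neighborSet (w i) ∩ Set.range w₂).Nonempty) ∧
    (∀ i j : Fin p, i < j →
      H.neighborSet (w i) ∩ Set.range w₁ ⊂ H.neighborSet (w j) ∩ Set.range w₁) ∧
    (∀ i j : Fin p, i < j →
      H.neighborSet (w (π i)) ∩ Set.range w₂ ⊂ H.neighborSet (w (π j)) ∩ Set.range w₂)

def IsInducedSubgraphOf {m n : ℕ} (H : SimpleGraph (Fin m)) (G : SimpleGraph (Fin n)) : Prop :=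
  ∃ f : Fin m ↪ Fin n, ∀ u v, H.Adj u v ↔ G.Adj (f u) (f v)

def Hereditary (C : ∀ n : ℕ, Set (SimpleGraph (Fin n))) : Prop :=
  ∀ (m n : ℕ) (H : SimpleGraph (Fin m)) (G : SimpleGraph (Fin n)),
    G ∈ C n → IsInducedSubgraphOf H G → H ∈ C m


def HasGrid (k : ℕ) (S : Finset (ℕ × ℕ)) : Prop :=
  ∃ P : Fin k → Fin k → ℕ × ℕ, (∀ i j, P i j ∈ S) ∧
    (∀ i i' j j', i < i' → (P i j).1 < (P i' j').1) ∧
    (∀ i i' j j', j < j' → (P i j).2 < (P i' j').2)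

theorem HasGrid.of_image {k : ℕ} {S : Finset (ℕ × ℕ)} {g : ℕ → ℕ} (hg : Monotone g)
    (h : HasGrid k (S.image (fun z => (g z.1, g z.2)))) : HasGrid k S := by
  obtain ⟨P, hP, h1, h2⟩ := h
  have : ∀ i j, ∃ z ∈ S, (g z.1, g z.2) = P i j := fun i j => by simpa using hP i j
  choose Q hQ hQP using this
  refine ⟨Q, hQ, ?_, ?_⟩
  · intro i i' j j' h
    have := h1 i i' j j' h
    rw [← hQP, ← hQP] at this
    exact hg.reflect_lt this
  · intro i i' j j' h
    have := h2 i i' j j' h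
    rw [← hQP, ← hQP] at this
    exact hg.reflect_lt this

theorem HasGrid.swap {k : ℕ} {S : Finset (ℕ × ℕ)}
    (h : HasGrid k (S.image Prod.swap)) : HasGrid k S := by
  obtain ⟨P, hP, h1, h2⟩ := h
  refine ⟨fun i j => (P j i).swap, ?_, ?_, ?_⟩
  · intro i j
    obtain ⟨z, hz, hzz⟩ := mem_image.1 (hP j i)
    change (P j i).swap ∈ S
    rw [← hzz]; simpa using hz
  · intro i i' j j' h
    exact h2 _ _ _ _ h
  · intro i i' j j' h
    exact h1 _ _ _ _ h

def blk (S : Finset (ℕ × ℕ)) (K : ℕ) (B : ℕ × ℕ) : Finset (ℕ × ℕ) :=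
  S.filter (fun z => (z.1 / K, z.2 / K) = B)

def bimg (S : Finset (ℕ × ℕ)) (K : ℕ) : Finset (ℕ × ℕ) :=
  S.image (fun z => (z.1 / K, z.2 / K))

theorem wide_col {k K : ℕ} (hK : 0 < K) {S : Finset (ℕ × ℕ)} (hS : ¬ HasGrid k S) (Y : ℕ)
    (T : Finset (ℕ × ℕ)) (hT : ∀ B ∈ T, B.2 = Y ∧ k ≤ ((blk S K B).image Prod.snd).card) :
    T.card ≤ 2 ^ K * k := by
  by_contra hlt
  push Not at hlt
  obtain ⟨c, hc, hcc⟩ := exists_lt_card_fiber_of_mul_lt_card_of_maps_to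
    (s := T) (t := (Ico (Y * K) (Y * K + K)).powerset)
    (f := fun B => (blk S K B).image Prod.snd) (n := k) (by
      intro B hB
      rw [mem_powerset]
      intro y hy
      obtain ⟨z, hz, rfl⟩ := mem_image.1 hy
      have h1 := (mem_filter.1 hz).2
      have h2 := (hT B hB).1
      have h3 : z.2 / K = Y := by rw [← h2, ← h1]
      rw [mem_Ico, ← h3]
      exact ⟨Nat.div_mul_le_self _ _, Nat.lt_div_mul_add hK⟩) (by
      rw [card_powerset]; simpa using hlt)
  set U := T.filter (fun B => (blk S K B).image Prod.snd = c) with hU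
  have hUmem : ∀ B ∈ U, B ∈ T ∧ (blk S K B).image Prod.snd = c := fun B hB => mem_filter.1 hB
  have hinj : (U.image Prod.fst).card = U.card := by
    apply card_image_of_injOn
    intro B hB B' hB' h
    exact Prod.ext h ((hT B (hUmem B hB).1).1.trans (hT B' (hUmem B' hB').1).1.symm)
  have hck : k ≤ c.card := by
    obtain ⟨B, hB⟩ : U.Nonempty := card_pos.1 (by omega)
    rw [← (hUmem B hB).2]
    exact (hT B (hUmem B hB).1).2
  have hUk : k ≤ (U.image Prod.fst).card := by omega
  let e := orderEmbOfCardLe _ hUk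
  let f := orderEmbOfCardLe _ hck
  have key : ∀ i j, ∃ z ∈ S, z.1 / K = e i ∧ z.2 = f j := by
    intro i j
    have he : e i ∈ U.image Prod.fst := orderEmbOfCardLe_mem _ hUk i
    have hf : f j ∈ c := orderEmbOfCardLe_mem _ hck j
    obtain ⟨B, hB, hBe⟩ := mem_image.1 he
    rw [← (hUmem B hB).2] at hf
    obtain ⟨z, hz, hzz⟩ := mem_image.1 hf
    obtain ⟨hz1, hz2⟩ := mem_filter.1 hz
    refine ⟨z, hz1, ?_, hzz⟩
    rw [← hBe, ← hz2]
  choose P hP h1 h2 using key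
  apply hS
  refine ⟨P, hP, ?_, ?_⟩
  · intro i i' j j' h
    have : (P i j).1 / K < (P i' j').1 / K := by
      rw [h1, h1]; exact e.strictMono h
    have hmono : Monotone (fun x => x / K) := fun a b hab => Nat.div_le_div_right hab
    exact hmono.reflect_lt this
  · intro i i' j j' h
    rw [h2, h2]; exact f.strictMono h

theorem wide_total {k K n : ℕ} (hK : 0 < K) {S : Finset (ℕ × ℕ)} (hS : ¬ HasGrid k S)
    (hn : ∀ z ∈ S, z.2 / K < n) :
    ((bimg S K).filter (fun B => k ≤ ((blk S K B).image Prod.snd).card)).card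
      ≤ 2 ^ K * k * n := by
  have := card_le_mul_card_image_of_maps_to (f := Prod.snd)
    (s := (bimg S K).filter (fun B => k ≤ ((blk S K B).image Prod.snd).card)) (t := range n)
    (by
      intro B hB
      obtain ⟨z, hz, rfl⟩ := mem_image.1 (mem_filter.1 hB).1
      exact mem_range.2 (hn z hz)) (2 ^ K * k) (by
      intro Y _
      apply wide_col hK hS Y
      intro B hB
      simp only [mem_filter] at hB
      exact ⟨hB.2, hB.1.2⟩)
  simpa using this

theorem tall_total {k K n : ℕ} (hK : 0 < K) {S : Finset (ℕ × ℕ)} (hS : ¬ HasGrid k S)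
    (hn : ∀ z ∈ S, z.1 / K < n) :
    ((bimg S K).filter (fun B => k ≤ ((blk S K B).image Prod.fst).card)).card
      ≤ 2 ^ K * k * n := by
  have h := wide_total (k := k) (n := n) hK (S := S.image Prod.swap) (fun h => hS h.swap) (by
    intro z hz
    obtain ⟨y, hy, rfl⟩ := mem_image.1 hz
    exact hn y hy)
  refine le_trans (le_of_eq ?_) h
  have e1 : ∀ B : ℕ × ℕ, (blk (S.image Prod.swap) K B.swap).image Prod.snd
      = (blk S K B).image Prod.fst := by
    intro B
    ext y
    simp only [blk, mem_image, mem_filter, Prod.exists, Prod.swap_prod_mk, Prod.mk.injEq]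
    constructor
    · rintro ⟨a, b, ⟨⟨c, d, hcd, rfl, rfl⟩, h⟩, rfl⟩
      refine ⟨_, _, ⟨hcd, ?_⟩, rfl⟩
      simp only [Prod.ext_iff, Prod.fst_swap, Prod.snd_swap] at h ⊢
      exact h.symm
    · rintro ⟨a, b, ⟨h1, h2⟩, rfl⟩
      refine ⟨b, a, ⟨⟨a, b, h1, rfl, rfl⟩, ?_⟩, rfl⟩
      simp only [Prod.ext_iff, Prod.fst_swap, Prod.snd_swap] at h2 ⊢
      exact h2.symm
  rw [← card_image_of_injective _ Prod.swap_injective]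
  congr 1
  ext B
  constructor
  · intro hB
    obtain ⟨B, hB0, rfl⟩ := mem_image.1 hB
    obtain ⟨hB1, hB2⟩ := mem_filter.1 hB0
    refine mem_filter.2 ⟨?_, by rw [e1]; exact hB2⟩
    obtain ⟨z, hz, rfl⟩ := mem_image.1 hB1
    exact mem_image.2 ⟨z.swap, mem_image_of_mem _ hz, rfl⟩
  · intro hB
    obtain ⟨hB1, hB2⟩ := mem_filter.1 hB
    refine mem_image.2 ⟨B.swap, mem_filter.2 ⟨?_, ?_⟩, Prod.swap_swap _⟩
    · obtain ⟨z, hz, rfl⟩ := mem_image.1 hB1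
      obtain ⟨y, hy, rfl⟩ := mem_image.1 hz
      exact mem_image.2 ⟨y, hy, rfl⟩
    · rw [← e1, Prod.swap_swap]; exact hB2

theorem blk_card_le {S : Finset (ℕ × ℕ)} {K : ℕ} (hK : 0 < K) (B : ℕ × ℕ) :
    (blk S K B).card ≤ K * K := by
  have : blk S K B ⊆ Ico (B.1 * K) (B.1 * K + K) ×ˢ Ico (B.2 * K) (B.2 * K + K) := by
    intro z hz
    have h := (mem_filter.1 hz).2
    rw [mem_product, mem_Ico, mem_Ico, ← h]
    exact ⟨⟨Nat.div_mul_le_self _ _, Nat.lt_div_mul_add hK⟩,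
      ⟨Nat.div_mul_le_self _ _, Nat.lt_div_mul_add hK⟩⟩
  simpa using card_le_card this

theorem mt_step {k K n m : ℕ} (hK : 0 < K) {S : Finset (ℕ × ℕ)} (hS : ¬ HasGrid (k + 1) S)
    (hn : ∀ z ∈ S, z.1 / K < n ∧ z.2 / K < n) (hm : (bimg S K).card ≤ m) :
    S.card ≤ k * k * m + 2 * (2 ^ K * (k + 1) * n) * (K * K) := by
  have h1 := wide_total hK hS (fun z hz => (hn z hz).2)
  have h2 := tall_total hK hS (fun z hz => (hn z hz).1)
  set W := (bimg S K).filter (fun B => k + 1 ≤ ((blk S K B).image Prod.snd).card)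
  set T := (bimg S K).filter (fun B => k + 1 ≤ ((blk S K B).image Prod.fst).card)
  have hsum : S.card = ∑ B ∈ bimg S K, (blk S K B).card := card_eq_sum_card_image _ S
  have hle : ∀ B ∈ bimg S K, (blk S K B).card ≤
      k * k + ((if B ∈ W then K * K else 0) + (if B ∈ T then K * K else 0)) := by
    intro B hB
    by_cases hW : B ∈ W
    · have := blk_card_le (S := S) hK B
      simp only [hW, if_true]; omega
    by_cases hT : B ∈ T
    · have := blk_card_le (S := S) hK B
      simp only [hT, if_true]; omega
    have a1 : ((blk S K B).image Prod.snd).card ≤ k := by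
      by_contra h; exact hW (mem_filter.2 ⟨hB, by omega⟩)
    have a2 : ((blk S K B).image Prod.fst).card ≤ k := by
      by_contra h; exact hT (mem_filter.2 ⟨hB, by omega⟩)
    have a3 : blk S K B ⊆ (blk S K B).image Prod.fst ×ˢ (blk S K B).image Prod.snd := by
      intro z hz
      exact mem_product.2 ⟨mem_image_of_mem _ hz, mem_image_of_mem _ hz⟩
    have a4 := card_le_card a3
    rw [card_product] at a4
    have := Nat.mul_le_mul a2 a1
    omega
  have h3 := sum_le_sum hle
  rw [← hsum, sum_add_distrib, sum_add_distrib, sum_const, smul_eq_mul, ← sum_filter, ← sum_filter,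
    sum_const, sum_const, smul_eq_mul, smul_eq_mul] at h3
  have f1 : ((bimg S K).filter (· ∈ W)).card ≤ W.card :=
    card_le_card (fun x hx => (mem_filter.1 hx).2)
  have f2 : ((bimg S K).filter (· ∈ T)).card ≤ T.card :=
    card_le_card (fun x hx => (mem_filter.1 hx).2)
  have g1 := Nat.mul_le_mul_right (K * K) (f1.trans h1)
  have g2 := Nat.mul_le_mul_right (K * K) (f2.trans h2)
  have g3 := Nat.mul_le_mul_right (k * k) hm
  nlinarith

theorem marcus_tardos (k : ℕ) : ∃ C : ℕ, ∀ n : ℕ, ∀ S : Finset (ℕ × ℕ),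
    (∀ z ∈ S, z.1 < n ∧ z.2 < n) → ¬ HasGrid (k + 1) S → S.card ≤ C * n := by
  set K := (k + 1) * (k + 1) with hKdef
  set D := 2 * (2 ^ K * (k + 1)) * (K * K) with hD
  have hK : 0 < K := by positivity
  refine ⟨K * K + D * (K + 1), ?_⟩
  set C := K * K + D * (K + 1) with hC
  intro n
  induction n using Nat.strong_induction_on with
  | _ n ih =>
  intro S hS hg
  by_cases hn : n ≤ K * K
  · have : S ⊆ range n ×ˢ range n := fun z hz => by simpa using hS z hz
    have := card_le_card this
    simp only [card_product, card_range] at this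
    have h2 : n * n ≤ C * n := Nat.mul_le_mul_right _ (by omega)
    omega
  push Not at hn
  rcases Nat.eq_zero_or_pos k with rfl | hk
  · -- no 1-grid means empty
    have : S = ∅ := by
      by_contra hne
      obtain ⟨z, hz⟩ := nonempty_iff_ne_empty.2 hne
      exact hg ⟨fun _ _ => z, fun _ _ => hz,
        fun i i' j j' h => by omega,
        fun i i' j j' h => by omega⟩
    simp [this]
  have hK4 : 4 ≤ K := by nlinarith
  set n' := n / K + 1 with hn'
  have hdm : n / K * K ≤ n := Nat.div_mul_le_self _ _
  have hlt : n' < n := by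
    have : n / K * 4 ≤ n := le_trans (Nat.mul_le_mul_left _ hK4) hdm
    have : 16 ≤ K * K := by nlinarith
    omega
  have hlt2 : ∀ x, x < n → x / K < n' := fun x hx => by
    have := Nat.div_le_div_right (c := K) hx.le
    omega
  have ih' := ih n' hlt (bimg S K) (by
    intro B hB
    obtain ⟨z, hz, rfl⟩ := mem_image.1 hB
    exact ⟨hlt2 _ (hS z hz).1, hlt2 _ (hS z hz).2⟩)
    (fun h => hg (HasGrid.of_image (g := fun x => x / K)
      (fun a b hab => Nat.div_le_div_right hab) h))
  have hstep := mt_step (n := n') hK hg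
    (fun z hz => ⟨hlt2 _ (hS z hz).1, hlt2 _ (hS z hz).2⟩) ih'
  have e : k * k * (C * n') + 2 * (2 ^ K * (k + 1) * n') * (K * K) = (k * k * C + D) * n' := by
    rw [hD]; ring
  rw [e] at hstep
  refine hstep.trans ?_
  -- (k^2 C + D) n' ≤ C n
  have b1 : n' * K ≤ n + K := by rw [hn', add_mul]; omega
  have b2 : n' * (K * K) ≤ n * (K + 1) := by nlinarith
  have b3 : (k * k * C + D) * (K + 1) ≤ C * (K * K) := by
    have : k * k * (K + 1) + 1 ≤ K * K := by
      rw [hKdef]; nlinarith [Nat.zero_le (k*k*k)]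
    have h2 : D * (K + 1) ≤ C := by omega
    nlinarith [Nat.mul_le_mul_left C this]
  have hKK : 0 < K * K := by positivity
  apply Nat.le_of_mul_le_mul_right _ hKK
  calc (k * k * C + D) * n' * (K * K) = (k * k * C + D) * (n' * (K * K)) := by ring
    _ ≤ (k * k * C + D) * (n * (K + 1)) := Nat.mul_le_mul_left _ b2
    _ = ((k * k * C + D) * (K + 1)) * n := by ring
    _ ≤ C * (K * K) * n := Nat.mul_le_mul_right _ b3
    _ = C * n * (K * K) := by ring

section Parts
variable {V : Type} [Fintype V] [DecidableEq V]

def kerPart {β : Type} [DecidableEq β] (f : V → β) : Finpartition (univ : Finset V) :=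
  letI : DecidableRel (Setoid.ker f).r := fun a b => decEq (f a) (f b)
  Finpartition.ofSetoid (Setoid.ker f)

theorem mem_kerPart {β : Type} [DecidableEq β] {f : V → β} {A : Finset V}
    (hA : A ∈ (kerPart f).parts) {x y : V} (hx : x ∈ A) : y ∈ A ↔ f x = f y := by
  have h := (kerPart f).part_eq_of_mem hA hx
  let _ : DecidableRel (Setoid.ker f).r := fun a b => decEq (f a) (f b)
  have h2 : y ∈ (kerPart f).part x ↔ _ := Finpartition.mem_part_ofSetoid_iff_rel
  rw [h] at h2
  exact h2

theorem le_iff_parts {P Q : Finpartition (univ : Finset V)} :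
    P ≤ Q ↔ ∀ A ∈ P.parts, ∃ B ∈ Q.parts, A ⊆ B := Iff.rfl

theorem merge_exists (P : Finpartition (univ : Finset V)) {A B : Finset V}
    (hA : A ∈ P.parts) (hB : B ∈ P.parts) :
    ∃ Q : Finpartition (univ : Finset V),
      Q.parts = insert (A ∪ B) ((P.parts.erase A).erase B) := by
  refine ⟨Finpartition.ofExistsUnique (insert (A ∪ B) ((P.parts.erase A).erase B)) ?_ ?_ ?_, rfl⟩
  · intro p _; exact subset_univ p
  · intro a _
    obtain ⟨t, ht, hat⟩ := P.exists_mem (mem_univ a)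
    have huni : ∀ s ∈ P.parts, a ∈ s → s = t := fun s hs has => P.eq_of_mem_parts hs ht has hat
    by_cases h : t = A ∨ t = B
    · refine ⟨A ∪ B, ⟨mem_insert_self _ _, ?_⟩, ?_⟩
      · rcases h with rfl | rfl
        · exact mem_union_left _ hat
        · exact mem_union_right _ hat
      · rintro s ⟨hs, has⟩
        rcases mem_insert.1 hs with rfl | hs
        · rfl
        · simp only [mem_erase] at hs
          have := huni s hs.2.2 has
          subst this
          rcases h with h | h
          · exact absurd h hs.2.1
          · exact absurd h hs.1
    · push Not at h
      refine ⟨t, ⟨mem_insert_of_mem (mem_erase.2 ⟨h.2, mem_erase.2 ⟨h.1, ht⟩⟩), hat⟩, ?_⟩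
      rintro s ⟨hs, has⟩
      rcases mem_insert.1 hs with rfl | hs
      · rcases mem_union.1 has with h' | h'
        · exact absurd (huni A hA h').symm h.1
        · exact absurd (huni B hB h').symm h.2
      · simp only [mem_erase] at hs
        exact huni s hs.2.2 has
  · intro h
    rcases mem_insert.1 h with h | h
    · have := P.nonempty_of_mem_parts hA
      obtain ⟨x, hx⟩ := this
      have : x ∈ A ∪ B := mem_union_left _ hx
      rw [← h] at this
      simp at this
    · simp only [mem_erase] at h
      exact P.empty_notMem_parts h.2.2

def StepD (G : SimpleGraph V) (d : ℕ) (P Q : Finpartition (univ : Finset V)) : Prop :=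
  IsMerge P Q ∧ ∀ A ∈ Q.parts, redDegree G Q A ≤ d

theorem merge_chain (G : SimpleGraph V) (d : ℕ) (Q : Finpartition (univ : Finset V)) :
    ∀ (N : ℕ) (P : Finpartition (univ : Finset V)), P.parts.card ≤ N → P ≤ Q →
    (∀ R, P ≤ R → R ≤ Q → ∀ A ∈ R.parts, redDegree G R A ≤ d) →
    Relation.ReflTransGen (StepD G d) P Q := by
  intro N
  induction N with
  | zero =>
    intro P hN hPQ hR
    have h1 : P.parts = ∅ := by simpa using hN
    have : Q.parts = ∅ := by
      rw [Finpartition.parts_eq_empty_iff] at h1 ⊢; exact h1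
    have : P = Q := Finpartition.ext (h1.trans this.symm)
    rw [this]
  | succ N ih =>
    intro P hN hPQ hR
    by_cases hex : ∃ C ∈ Q.parts, ∃ A ∈ P.parts, ∃ B ∈ P.parts, A ≠ B ∧ A ⊆ C ∧ B ⊆ C
    · obtain ⟨C, hC, A, hA, B, hB, hAB, hAC, hBC⟩ := hex
      obtain ⟨P', hP'⟩ := merge_exists P hA hB
      have hle : P ≤ P' := by
        rw [le_iff_parts]
        intro D hD
        by_cases h1 : D = A
        · subst h1; exact ⟨_, by rw [hP']; exact mem_insert_self _ _, subset_union_left⟩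
        by_cases h2 : D = B
        · subst h2; exact ⟨_, by rw [hP']; exact mem_insert_self _ _, subset_union_right⟩
        exact ⟨D, by rw [hP']; simp [h1, h2, hD], Subset.refl _⟩
      have hle2 : P' ≤ Q := by
        rw [le_iff_parts]
        intro D hD
        rw [hP'] at hD
        rcases mem_insert.1 hD with rfl | hD
        · exact ⟨C, hC, union_subset hAC hBC⟩
        · simp only [mem_erase] at hD
          exact hPQ hD.2.2
      have hcard : P'.parts.card ≤ N := by
        rw [hP']
        have h1 := card_insert_le (A ∪ B) ((P.parts.erase A).erase B)
        rw [card_erase_of_mem (mem_erase.2 ⟨hAB.symm, hB⟩), card_erase_of_mem hA] at h1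
        have h2 : ({A, B} : Finset (Finset V)).card ≤ P.parts.card := card_le_card (by
          intro x hx
          simp only [mem_insert, mem_singleton] at hx
          rcases hx with rfl | rfl <;> assumption)
        rw [card_pair hAB] at h2
        omega
      have := ih P' hcard hle2 (fun R h1 h2 => hR R (hle.trans h1) h2)
      exact Relation.ReflTransGen.head ⟨⟨A, hA, B, hB, hAB, hP'⟩, hR P' hle hle2⟩ this
    · push Not at hex
      have key : ∀ C ∈ Q.parts, ∀ A ∈ P.parts, A ⊆ C → A = C := by
        intro C hC A hA hAC
        apply Subset.antisymm hAC
        intro x hx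
        obtain ⟨B, hB, hxB⟩ := P.exists_mem (mem_univ x)
        obtain ⟨C', hC', hBC'⟩ := hPQ hB
        have : C' = C := Q.eq_of_mem_parts hC' hC (hBC' hxB) hx
        subst this
        by_contra hxA
        have hne : A ≠ B := by rintro rfl; exact hxA hxB
        exact hex C' hC A hA B hB hne hAC hBC'
      have : P = Q := by
        apply Finpartition.ext
        ext C
        constructor
        · intro hC
          obtain ⟨D, hD, hCD⟩ := hPQ hC
          rw [key D hD C hC hCD]; exact hD
        · intro hC
          obtain ⟨x, hx⟩ := Q.nonempty_of_mem_parts hC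
          obtain ⟨B, hB, hxB⟩ := P.exists_mem (mem_univ x)
          obtain ⟨C', hC', hBC'⟩ := hPQ hB
          have : C' = C := Q.eq_of_mem_parts hC' hC (hBC' hxB) hx
          subst this
          rw [← key _ hC B hB hBC']; exact hB
      rw [this]

theorem tww_of_chain (G : SimpleGraph V) (d : ℕ) (P Q : Finpartition (univ : Finset V))
    (hP : ∀ A ∈ P.parts, A.card = 1) (hP' : ∀ A ∈ P.parts, redDegree G P A ≤ d)
    (hQ : Q.parts.card ≤ 1)
    (h : Relation.ReflTransGen (StepD G d) P Q) : TwinWidthLE G d := by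
  obtain ⟨l, hl, hlast⟩ := List.exists_isChain_cons_of_relationReflTransGen h
  refine ⟨P :: l, ⟨P, rfl, hP⟩, ⟨Q, ?_, hQ⟩, ?_, ?_⟩
  · rw [List.getLast?_eq_some_getLast (List.cons_ne_nil _ _), hlast]
  · exact List.IsChain.imp (fun _ _ h => h.1) hl
  · intro R hR
    have : ∀ (l : List (Finpartition (univ : Finset V))) (P : Finpartition (univ : Finset V)),
        List.IsChain (StepD G d) (P :: l) → (∀ A ∈ P.parts, redDegree G P A ≤ d) →
        ∀ R ∈ P :: l, ∀ A ∈ R.parts, redDegree G R A ≤ d := by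
      intro l
      induction l with
      | nil => intro P _ hP R hR; simp only [List.mem_singleton] at hR; subst hR; exact hP
      | cons Q l ih =>
        intro P hc hP R hR
        rw [List.isChain_cons_cons] at hc
        rcases List.mem_cons.1 hR with rfl | hR
        · exact hP
        · exact ih Q hc.2 hc.1.2 R hR
    exact this l P hl hP' R hR

end Parts

section St
variable {V : Type} [Fintype V] [DecidableEq V]

def cellsOf (a b : V → ℕ) : Finset (ℕ × ℕ) := univ.image (fun v => (a v, b v))

def rowW (S : Finset (ℕ × ℕ)) (k : ℕ) : ℕ := (S.filter (fun z => z.1 = k)).card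
def colW (S : Finset (ℕ × ℕ)) (k : ℕ) : ℕ := (S.filter (fun z => z.2 = k)).card

def goodB (G : SimpleGraph V) (a b : V → ℕ) (k : ℕ) : Prop :=
  ∀ u v, u ≠ v → b u = k → a v = k → G.Adj u v

structure StateD (G : SimpleGraph V) (a b : V → ℕ) (D : ℕ) : Prop where
  hlt : ∀ u v, b u < a v → ¬ G.Adj u v
  hov : ∀ u v, u ≠ v → a v < b u → a u < b v → G.Adj u v
  hbad : ∀ k, goodB G a b k ∨ (rowW (cellsOf a b) k ≤ D ∧ colW (cellsOf a b) k ≤ D)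

open Classical in
theorem red_bound {G : SimpleGraph V} {a b : V → ℕ} {D : ℕ} {g : ℕ → ℕ}
    (hg : ∀ x, x = g x ∨ x = g x + 1)
    (hst : StateD G (fun v => g (a v)) (fun v => g (b v)) D)
    (R : Finpartition (univ : Finset V))
    (hR1 : kerPart (fun v => (a v, b v)) ≤ R)
    (hR2 : R ≤ kerPart (fun v => (g (a v), g (b v))))
    {A : Finset V} (hA : A ∈ R.parts) : redDegree G R A ≤ 4 * (2 * D + 1) := by
  set a' : V → ℕ := fun v => g (a v) with ha'
  set b' : V → ℕ := fun v => g (b v) with hb'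
  obtain ⟨x, hx⟩ := R.nonempty_of_mem_parts hA
  have hconst : ∀ B ∈ R.parts, ∀ u ∈ B, ∀ v ∈ B, a' u = a' v ∧ b' u = b' v := by
    intro B hB u hu v hv
    obtain ⟨B', hB', hBB'⟩ := hR2 hB
    have := (mem_kerPart hB' (hBB' hu)).1 (hBB' hv)
    simpa using this
  let S' := cellsOf a' b'
  let F1 := if goodB G a' b' (b' x) then (∅ : Finset (ℕ × ℕ)) else S'.filter (fun z => z.1 = b' x)
  let F2 := if goodB G a' b' (a' x) then (∅ : Finset (ℕ × ℕ)) else S'.filter (fun z => z.2 = a' x)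
  let RR := insert (a' x, b' x) (F1 ∪ F2)
  have hF1 : F1.card ≤ D := by
    simp only [F1]
    split_ifs with h
    · simp
    · rcases hst.hbad (b' x) with h' | h'
      · exact absurd h' h
      · exact h'.1
  have hF2 : F2.card ≤ D := by
    simp only [F2]
    split_ifs with h
    · simp
    · rcases hst.hbad (a' x) with h' | h'
      · exact absurd h' h
      · exact h'.2
  have hRR : RR.card ≤ 2 * D + 1 := by
    have h1 := card_insert_le (a' x, b' x) (F1 ∪ F2)
    have h2 := card_union_le F1 F2
    simp only [RR]; omega
  let T := RR.biUnion (fun z => ({z.1, z.1 + 1} : Finset ℕ) ×ˢ ({z.2, z.2 + 1} : Finset ℕ))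
  have hT : T.card ≤ 4 * (2 * D + 1) := by
    have : T.card ≤ RR.card * 4 := card_biUnion_le_card_mul _ _ _ (fun z _ => by
      rw [card_product]
      have h1 : ({z.1, z.1 + 1} : Finset ℕ).card ≤ 2 := card_le_two
      have h2 : ({z.2, z.2 + 1} : Finset ℕ).card ≤ 2 := card_le_two
      nlinarith)
    omega
  refine le_trans ?_ hT
  have hne : ∀ B : Finset V, ∃ y : V, B ∈ R.parts → y ∈ B := by
    intro B
    by_cases h : B ∈ R.parts
    · obtain ⟨y, hy⟩ := R.nonempty_of_mem_parts h
      exact ⟨y, fun _ => hy⟩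
    · exact ⟨x, fun h' => absurd h' h⟩
  choose y hy using hne
  unfold redDegree
  refine card_le_card_of_injOn (fun B => (a (y B), b (y B))) ?_ ?_
  · intro B hB
    simp only [coe_filter, mem_erase, Set.mem_ofPred_eq] at hB
    obtain ⟨⟨hBA, hBR⟩, hnh⟩ := hB
    have hyB := hy B hBR
    have hxy : x ≠ y B := by
      intro h
      exact hBA (R.eq_of_mem_parts hBR hA hyB (h ▸ hx))
    have hdis : ∀ u ∈ A, ∀ v ∈ B, u ≠ v := by
      rintro u hu v hv rfl
      exact hBA (R.eq_of_mem_parts hBR hA hv hu)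
    have hmem : (a' (y B), b' (y B)) ∈ RR := by
      by_contra hcon
      simp only [RR, mem_insert, mem_union, not_or] at hcon
      obtain ⟨-, hc1, hc2⟩ := hcon
      have hS : (a' (y B), b' (y B)) ∈ S' := mem_image.2 ⟨y B, mem_univ _, rfl⟩
      apply hnh
      by_cases c1 : b' x < a' (y B)
      · right
        intro u hu v hv
        apply hst.hlt
        rw [(hconst A hA u hu x hx).2, (hconst B hBR v hv _ hyB).1]; exact c1
      by_cases c2 : b' (y B) < a' x
      · right
        intro u hu v hv hadj
        refine hst.hlt v u ?_ hadj.symm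
        rw [(hconst A hA u hu x hx).1, (hconst B hBR v hv _ hyB).2]; exact c2
      left
      intro u hu v hv
      have e1 := hconst A hA u hu x hx
      have e2 := hconst B hBR v hv _ hyB
      by_cases c3 : a' (y B) = b' x
      · have hgood : goodB G a' b' (b' x) := by
          by_contra hng
          apply hc1
          simp only [F1, hng, if_false]
          exact mem_filter.2 ⟨hS, c3⟩
        exact hgood u v (hdis u hu v hv) e1.2 (e2.1.trans c3)
      by_cases c4 : b' (y B) = a' x
      · have hgood : goodB G a' b' (a' x) := by
          by_contra hng
          apply hc2
          simp only [F2, hng, if_false]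
          exact mem_filter.2 ⟨hS, c4⟩
        exact (hgood v u (hdis u hu v hv).symm (e2.2.trans c4) e1.1).symm
      apply hst.hov u v (hdis u hu v hv)
      · rw [e1.2, e2.1]; omega
      · rw [e1.1, e2.2]; omega
    simp only [T, coe_biUnion, Set.mem_iUnion, mem_coe]
    refine ⟨_, hmem, ?_⟩
    simp only [mem_product, mem_insert, mem_singleton]
    exact ⟨hg _, hg _⟩
  · intro B hB B' hB' h
    simp only [coe_filter, mem_erase, Set.mem_ofPred_eq] at hB hB'
    have hyB := hy B hB.1.2
    have hyB' := hy B' hB'.1.2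
    obtain ⟨C, hC, hyC⟩ := (kerPart (fun v => (a v, b v))).exists_mem (mem_univ (y B))
    have hyC' : y B' ∈ C := (mem_kerPart hC hyC).2 h
    obtain ⟨E, hE, hCE⟩ := hR1 hC
    rw [R.eq_of_mem_parts hB.1.2 hE hyB (hCE hyC), R.eq_of_mem_parts hB'.1.2 hE hyB' (hCE hyC')]

def mg (i x : ℕ) : ℕ := if x ≤ i then x else x - 1

theorem mg_mono (i : ℕ) : Monotone (mg i) := by
  intro x y h
  unfold mg
  split_ifs <;> omega

theorem cells_mg (a b : V → ℕ) (i : ℕ) : cellsOf (fun v => mg i (a v)) (fun v => mg i (b v)) =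
    (cellsOf a b).image (fun z => (mg i z.1, mg i z.2)) := by
  unfold cellsOf
  rw [image_image]
  rfl

theorem state_merge {G : SimpleGraph V} {a b : V → ℕ} {D i : ℕ} (hst : StateD G a b D)
    (hw : rowW (cellsOf a b) i + rowW (cellsOf a b) (i + 1) ≤ D)
    (hw' : colW (cellsOf a b) i + colW (cellsOf a b) (i + 1) ≤ D) :
    StateD G (fun v => mg i (a v)) (fun v => mg i (b v)) D := by
  refine ⟨?_, ?_, ?_⟩
  · intro u v h
    exact hst.hlt u v ((mg_mono i).reflect_lt h)
  · intro u v huv h1 h2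
    exact hst.hov u v huv ((mg_mono i).reflect_lt h1) ((mg_mono i).reflect_lt h2)
  · intro k
    rw [cells_mg]
    set S := cellsOf a b
    by_cases hk : k = i
    · subst hk
      right
      constructor
      · refine le_trans ?_ hw
        unfold rowW
        refine le_trans ?_ (card_union_le _ _)
        refine le_trans (card_le_card ?_) (card_image_le (f := fun z => (mg k z.1, mg k z.2)))
        intro z hz
        obtain ⟨hz1, hz2⟩ := mem_filter.1 hz
        obtain ⟨y, hy, rfl⟩ := mem_image.1 hz1
        refine mem_image_of_mem _ ?_
        simp only [mem_union, mem_filter, hy, true_and]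
        simp only [mg] at hz2
        split_ifs at hz2 <;> omega
      · refine le_trans ?_ hw'
        unfold colW
        refine le_trans ?_ (card_union_le _ _)
        refine le_trans (card_le_card ?_) (card_image_le (f := fun z => (mg k z.1, mg k z.2)))
        intro z hz
        obtain ⟨hz1, hz2⟩ := mem_filter.1 hz
        obtain ⟨y, hy, rfl⟩ := mem_image.1 hz1
        refine mem_image_of_mem _ ?_
        simp only [mem_union, mem_filter, hy, true_and]
        simp only [mg] at hz2
        split_ifs at hz2 <;> omega
    · obtain ⟨k', hk'⟩ : ∃ k', ∀ x, mg i x = k → x = k' := by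
        by_cases h : k < i
        · refine ⟨k, fun x hx => ?_⟩
          unfold mg at hx; split_ifs at hx <;> omega
        · refine ⟨k + 1, fun x hx => ?_⟩
          unfold mg at hx; split_ifs at hx <;> omega
      rcases hst.hbad k' with h | h
      · left
        intro u v huv h1 h2
        exact h u v huv (hk' _ h1) (hk' _ h2)
      · right
        constructor
        · refine le_trans ?_ h.1
          unfold rowW
          refine le_trans (card_le_card ?_) (card_image_le (f := fun z => (mg i z.1, mg i z.2)))
          intro z hz
          obtain ⟨hz1, hz2⟩ := mem_filter.1 hz
          obtain ⟨y, hy, rfl⟩ := mem_image.1 hz1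
          exact mem_image_of_mem _ (mem_filter.2 ⟨hy, hk' _ hz2⟩)
        · refine le_trans ?_ h.2
          unfold colW
          refine le_trans (card_le_card ?_) (card_image_le (f := fun z => (mg i z.1, mg i z.2)))
          intro z hz
          obtain ⟨hz1, hz2⟩ := mem_filter.1 hz
          obtain ⟨y, hy, rfl⟩ := mem_image.1 hz1
          exact mem_image_of_mem _ (mem_filter.2 ⟨hy, hk' _ hz2⟩)

theorem sum_pairs (w : ℕ → ℕ) (c m : ℕ) (h : ∀ t < m, c ≤ w (2 * t) + w (2 * t + 1)) :
    m * c ≤ ∑ k ∈ range (2 * m), w k := by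
  induction m with
  | zero => simp
  | succ m ih =>
    have h1 := ih (fun t ht => h t (by omega))
    have h2 := h m (by omega)
    rw [show 2 * (m + 1) = 2 * m + 1 + 1 by ring, sum_range_succ, sum_range_succ, add_mul]
    omega

theorem exists_light {S : Finset (ℕ × ℕ)} {q C : ℕ} (hq : 2 ≤ q)
    (hS : ∀ z ∈ S, z.1 < q ∧ z.2 < q) (hC : S.card ≤ C * q) :
    ∃ i, i + 1 < q ∧ rowW S i + rowW S (i + 1) ≤ 6 * C ∧ colW S i + colW S (i + 1) ≤ 6 * C := by
  by_contra hcon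
  push Not at hcon
  have h1 : S.card = ∑ k ∈ range q, rowW S k :=
    card_eq_sum_card_fiberwise (fun z hz => by simpa using (hS z hz).1)
  have h2 : S.card = ∑ k ∈ range q, colW S k :=
    card_eq_sum_card_fiberwise (fun z hz => by simpa using (hS z hz).2)
  have h3 := sum_pairs (fun k => rowW S k + colW S k) (6 * C + 1) (q / 2) (by
    intro t ht
    by_contra hlt
    have := hcon (2 * t) (by omega) (by omega)
    omega)
  have h4 : ∑ k ∈ range (2 * (q / 2)), (rowW S k + colW S k)
      ≤ ∑ k ∈ range q, (rowW S k + colW S k) :=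
    sum_le_sum_of_subset (range_subset_range.2 (by omega))
  rw [sum_add_distrib (s := range q), ← h1, ← h2] at h4
  have h5 : q ≤ 3 * (q / 2) := by omega
  have h6 : 1 ≤ q / 2 := by omega
  nlinarith [Nat.mul_le_mul_left C h5]

theorem ker_le {β γ : Type} [DecidableEq β] [DecidableEq γ] {f : V → β} {f' : V → γ}
    (h : ∀ u v, f u = f v → f' u = f' v) : kerPart f ≤ kerPart f' := by
  rw [le_iff_parts]
  intro A hA
  obtain ⟨x, hx⟩ := (kerPart f).nonempty_of_mem_parts hA
  obtain ⟨B, hB, hxB⟩ := (kerPart f').exists_mem (mem_univ x)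
  refine ⟨B, hB, fun y hy => ?_⟩
  exact (mem_kerPart hB hxB).2 (h _ _ ((mem_kerPart hA hx).1 hy))

theorem state_chain {k C : ℕ}
    (hMT : ∀ n : ℕ, ∀ S : Finset (ℕ × ℕ),
      (∀ z ∈ S, z.1 < n ∧ z.2 < n) → ¬ HasGrid (k + 1) S → S.card ≤ C * n)
    (G : SimpleGraph V) : ∀ (q : ℕ) (a b : V → ℕ), StateD G a b (6 * C) →
      (∀ v, a v < q ∧ b v < q) → ¬ HasGrid (k + 1) (cellsOf a b) →
      ∃ Q : Finpartition (univ : Finset V), Q.parts.card ≤ 1 ∧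
        Relation.ReflTransGen (StepD G (4 * (2 * (6 * C) + 1)))
          (kerPart (fun v => (a v, b v))) Q := by
  intro q
  induction q with
  | zero =>
    intro a b _ hq _
    refine ⟨_, ?_, Relation.ReflTransGen.refl⟩
    rw [card_le_one]
    intro A hA
    obtain ⟨x, hx⟩ := (kerPart _).nonempty_of_mem_parts hA
    exact absurd (hq x).1 (by omega)
  | succ q ih =>
    intro a b hst hq hgrid
    by_cases hq2 : q + 1 < 2
    · refine ⟨_, ?_, Relation.ReflTransGen.refl⟩
      rw [card_le_one]
      intro A hA B hB
      obtain ⟨x, hx⟩ := (kerPart _).nonempty_of_mem_parts hA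
      obtain ⟨y, hy⟩ := (kerPart _).nonempty_of_mem_parts hB
      refine (kerPart _).eq_of_mem_parts hA hB hx ((mem_kerPart hB hy).2 ?_)
      have h1 := hq x
      have h2 := hq y
      ext <;> simp <;> omega
    push Not at hq2
    have hS : ∀ z ∈ cellsOf a b, z.1 < q + 1 ∧ z.2 < q + 1 := by
      intro z hz
      obtain ⟨v, _, rfl⟩ := mem_image.1 hz
      exact hq v
    obtain ⟨i, hi, hr, hc⟩ := exists_light hq2 hS (hMT _ _ hS hgrid)
    have hst' := state_merge hst hr hc
    obtain ⟨Q, hQ, hch⟩ := ih _ _ hst' (by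
      intro v
      have := hq v
      simp only [mg]
      split_ifs <;> omega) (by
      rw [cells_mg]
      exact fun h => hgrid (HasGrid.of_image (mg_mono i) h))
    refine ⟨Q, hQ, Relation.ReflTransGen.trans ?_ hch⟩
    apply merge_chain G _ _ _ _ le_rfl
    · apply ker_le
      intro u v h
      simp only [Prod.mk.injEq] at h ⊢
      rw [h.1, h.2]; exact ⟨rfl, rfl⟩
    · intro R h1 h2 A hA
      exact red_bound (g := mg i) (by intro x; simp only [mg]; split_ifs <;> omega) hst' R h1 h2 hA

theorem tww_of_rep {k C : ℕ}
    (hMT : ∀ n : ℕ, ∀ S : Finset (ℕ × ℕ),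
      (∀ z ∈ S, z.1 < n ∧ z.2 < n) → ¬ HasGrid (k + 1) S → S.card ≤ C * n)
    (G : SimpleGraph V) (q : ℕ) (a b : V → ℕ) (hq : ∀ v, a v < q ∧ b v < q)
    (hadj : ∀ u v, u ≠ v → (G.Adj u v ↔ a u ≤ b v ∧ a v ≤ b u))
    (hle : ∀ v, a v ≤ b v)
    (hg : ¬ HasGrid (k + 1) (cellsOf a b)) :
    TwinWidthLE G (4 * (2 * (6 * C) + 1)) := by
  have hst : StateD G a b (6 * C) := by
    refine ⟨?_, ?_, ?_⟩
    · intro u v h hA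
      have := (hadj u v hA.ne).1 hA
      omega
    · intro u v huv h1 h2
      rw [hadj u v huv]; omega
    · intro k
      left
      intro u v huv h1 h2
      rw [hadj u v huv]
      have := hle u
      have := hle v
      omega
  obtain ⟨Q, hQ, hch⟩ := state_chain hMT G q a b hst hq hg
  have hred : ∀ R, kerPart (id : V → V) ≤ R → R ≤ kerPart (fun v => (a v, b v)) →
      ∀ A ∈ R.parts, redDegree G R A ≤ 4 * (2 * (6 * C) + 1) := by
    intro R _ h2 A hA
    suffices redDegree G R A = 0 by omega
    unfold redDegree
    rw [card_eq_zero]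
    refine eq_empty_of_forall_notMem fun B hB0 => ?_
    simp only [mem_filter] at hB0
    obtain ⟨hB, hnh⟩ := hB0
    apply hnh
    obtain ⟨hBA, hBR⟩ := mem_erase.1 hB
    obtain ⟨A', hA', hAA'⟩ := h2 hA
    obtain ⟨B', hB', hBB'⟩ := h2 hBR
    obtain ⟨x, hx⟩ := R.nonempty_of_mem_parts hA
    obtain ⟨y, hy⟩ := R.nonempty_of_mem_parts hBR
    have key : ∀ u ∈ A, ∀ v ∈ B, (G.Adj u v ↔ a x ≤ b y ∧ a y ≤ b x) := by
      intro u hu v hv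
      have huv : u ≠ v := by
        rintro rfl
        exact hBA (R.eq_of_mem_parts hBR hA hv hu)
      rw [hadj u v huv]
      have e1 := (mem_kerPart hA' (hAA' hx)).1 (hAA' hu)
      have e2 := (mem_kerPart hB' (hBB' hy)).1 (hBB' hv)
      simp only [Prod.mk.injEq] at e1 e2
      rw [e1.1, e1.2, e2.1, e2.2]
    by_cases h : a x ≤ b y ∧ a y ≤ b x
    · left; intro u hu v hv; rw [key u hu v hv]; exact h
    · right; intro u hu v hv; rw [key u hu v hv]; exact h
  have hle0 : kerPart (id : V → V) ≤ kerPart (fun v => (a v, b v)) := by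
    apply ker_le
    intro u v h
    simp only [id] at h
    rw [h]
  refine tww_of_chain G _ (kerPart (id : V → V)) Q ?_ ?_ hQ
    ((merge_chain G _ _ _ _ le_rfl hle0 hred).trans hch)
  · intro A hA
    obtain ⟨x, hx⟩ := (kerPart _).nonempty_of_mem_parts hA
    rw [card_eq_one]
    refine ⟨x, ?_⟩
    ext y
    rw [mem_kerPart hA hx, mem_singleton]
    exact eq_comm
  · exact hred _ le_rfl hle0

end St

section Rep

def IsRep {n : ℕ} (G : SimpleGraph (Fin n)) (q : ℕ) : Prop :=
  ∃ a b : Fin n → ℕ, (∀ v, a v < q ∧ b v < q) ∧ (∀ v, a v ≤ b v) ∧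
    ∀ u v, u ≠ v → (G.Adj u v ↔ a u ≤ b v ∧ a v ≤ b u)

theorem exists_rep {n : ℕ} {G : SimpleGraph (Fin n)} (h : IsIntervalGraph G) :
    ∃ q, IsRep G q := by
  obtain ⟨l, r, hlr, hadj⟩ := h
  let E : Finset ℚ := univ.image l ∪ univ.image r
  let ρ : ℚ → ℕ := fun x => (E.filter (· < x)).card
  have hmono : ∀ x y, x ≤ y → ρ x ≤ ρ y := by
    intro x y hxy
    apply card_le_card
    intro z hz
    rw [mem_filter] at hz ⊢
    exact ⟨hz.1, hz.2.trans_le hxy⟩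
  have hstrict : ∀ x y, x ∈ E → x < y → ρ x < ρ y := by
    intro x y hx hxy
    apply card_lt_card
    rw [ssubset_iff_of_subset]
    · exact ⟨x, mem_filter.2 ⟨hx, hxy⟩, by simp⟩
    · intro z hz
      rw [mem_filter] at hz ⊢
      exact ⟨hz.1, hz.2.trans hxy⟩
  have hiff : ∀ u v, (l u ≤ r v ↔ ρ (l u) ≤ ρ (r v)) := by
    intro u v
    constructor
    · exact hmono _ _
    · intro h
      by_contra hlt
      push Not at hlt
      have := hstrict (r v) (l u) (mem_union_right _ (mem_image_of_mem _ (mem_univ v))) hlt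
      omega
  have hb : ∀ x, ρ x < E.card + 1 := fun x => Nat.lt_succ_of_le (card_le_card (filter_subset _ _))
  refine ⟨E.card + 1, fun v => ρ (l v), fun v => ρ (r v), fun v => ⟨hb _, hb _⟩,
    fun v => hmono _ _ (hlr v), ?_⟩
  intro u v huv
  rw [hadj u v huv, max_le_iff, le_min_iff, le_min_iff]
  simp only [← hiff]
  constructor
  · rintro ⟨⟨_, h1⟩, h2, _⟩; exact ⟨h1, h2⟩
  · rintro ⟨h1, h2⟩; exact ⟨⟨hlr u, h1⟩, h2, hlr v⟩

theorem exists_tight_rep {n : ℕ} {G : SimpleGraph (Fin n)} (h : IsIntervalGraph G) :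
    ∃ (q : ℕ) (a b : Fin n → ℕ), (∀ v, a v < q ∧ b v < q) ∧ (∀ v, a v ≤ b v) ∧
      (∀ u v, u ≠ v → (G.Adj u v ↔ a u ≤ b v ∧ a v ≤ b u)) ∧
      (∀ k < q, ∃ v, a v = k) ∧ (∀ k < q, ∃ v, b v = k) := by
  classical
  have hex := exists_rep h
  obtain ⟨a, b, hq, hle, hadj⟩ := Nat.find_spec hex
  have hmin : ∀ m, m < Nat.find hex → ¬ IsRep G m := fun m hm => Nat.find_min hex hm
  set q := Nat.find hex
  refine ⟨q, a, b, hq, hle, hadj, ?_, ?_⟩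
  · intro k hk
    by_contra hno
    push Not at hno
    refine hmin (q - 1) (by omega) ⟨fun v => if a v < k then a v else a v - 1,
      fun v => if b v < k then b v else b v - 1, ?_, ?_, ?_⟩
    · intro v
      have h1 := hq v; have h2 := hle v; have h3 := hno v
      constructor <;> dsimp only <;> split_ifs <;> omega
    · intro v
      have h1 := hq v; have h2 := hle v; have h3 := hno v
      dsimp only
      split_ifs <;> omega
    · intro u v huv
      rw [hadj u v huv]
      have h1 := hq v; have h2 := hle v; have h3 := hno v
      have h4 := hq u; have h5 := hle u; have h6 := hno u
      dsimp only
      split_ifs <;> omega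
  · intro k hk
    by_contra hno
    push Not at hno
    refine hmin (q - 1) (by omega) ⟨fun v => if a v ≤ k then a v else a v - 1,
      fun v => if b v ≤ k then b v else b v - 1, ?_, ?_, ?_⟩
    · intro v
      have h1 := hq v; have h2 := hle v; have h3 := hno v
      constructor <;> dsimp only <;> split_ifs <;> omega
    · intro v
      have h1 := hq v; have h2 := hle v; have h3 := hno v
      dsimp only
      split_ifs <;> omega
    · intro u v huv
      rw [hadj u v huv]
      have h1 := hq v; have h2 := hle v; have h3 := hno v
      have h4 := hq u; have h5 := hle u; have h6 := hno u
      dsimp only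
      split_ifs <;> omega

theorem expose_of_grid {n : ℕ} {G : SimpleGraph (Fin n)} {q : ℕ} {a b : Fin n → ℕ}
    (hq : ∀ v, a v < q ∧ b v < q) (hle : ∀ v, a v ≤ b v)
    (hadj : ∀ u v, u ≠ v → (G.Adj u v ↔ a u ≤ b v ∧ a v ≤ b u))
    (ha : ∀ k < q, ∃ v, a v = k) (hb : ∀ k < q, ∃ v, b v = k)
    {p : ℕ} (hg : HasGrid (p + 1) (cellsOf a b)) (π : Equiv.Perm (Fin p)) :
    ∃ (m : ℕ) (H : SimpleGraph (Fin m)), IsInducedSubgraphOf H G ∧ Exposes H π := by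
  obtain ⟨P, hP, hP1, hP2⟩ := hg
  have : ∀ i j, ∃ v, (a v, b v) = P i j := fun i j => by
    obtain ⟨v, _, hv⟩ := mem_image.1 (hP i j)
    exact ⟨v, hv⟩
  choose Q hQ using this
  have hQ1 : ∀ i i' j j', i < i' → a (Q i j) < a (Q i' j') := by
    intro i i' j j' h
    have := hP1 i i' j j' h
    rw [← hQ, ← hQ] at this
    exact this
  have hQ2 : ∀ i i' j j', j < j' → b (Q i j) < b (Q i' j') := by
    intro i i' j j' h
    have := hP2 i i' j j' h
    rw [← hQ, ← hQ] at this
    exact this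
  let w : Fin p → Fin n := fun s => Q (Fin.rev (π.symm s)).castSucc s.succ
  have hwa : ∀ s t, a (w s) ≤ a (w t) ↔ π.symm t ≤ π.symm s := by
    intro s t
    constructor
    · intro h
      by_contra hlt
      push Not at hlt
      have := hQ1 (Fin.rev (π.symm t)).castSucc (Fin.rev (π.symm s)).castSucc t.succ s.succ
        (by simpa using hlt)
      simp only [w] at h
      omega
    · intro h
      rcases h.eq_or_lt with h | h
      · have : t = s := π.symm.injective h
        rw [this]
      · exact (hQ1 _ _ _ _ (by simpa using h)).le
  have hwb : ∀ s t, b (w s) ≤ b (w t) ↔ s ≤ t := by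
    intro s t
    constructor
    · intro h
      by_contra hlt
      push Not at hlt
      have := hQ2 (Fin.rev (π.symm t)).castSucc (Fin.rev (π.symm s)).castSucc t.succ s.succ
        (by simpa using hlt)
      simp only [w] at h
      omega
    · intro h
      rcases h.eq_or_lt with h | h
      · rw [h]
      · exact (hQ2 _ _ _ _ (by simpa using h)).le
  have hsep : ∀ s t, a (w s) < b (w t) := by
    intro s t
    have h1 : a (w s) < a (Q (Fin.last p) 0) := hQ1 _ _ _ _ (Fin.castSucc_lt_last _)
    have h2 : b (Q (Fin.last p) 0) < b (w t) := hQ2 _ _ _ _ (Fin.succ_pos _)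
    have := hle (Q (Fin.last p) 0)
    omega
  choose x hx using fun t => ha (b (w t)) (hq _).2
  choose y hy using fun t => hb (a (w t)) (hq _).1
  have hwx : ∀ s t, w s ≠ x t := by
    intro s t h
    have h1 := hsep s t
    rw [← hx t, ← h] at h1
    omega
  have hwy : ∀ s t, w s ≠ y t := by
    intro s t h
    have h1 := hsep t s
    rw [← hy t, ← h] at h1
    omega
  have hxy : ∀ s t, x s ≠ y t := by
    intro s t h
    have h1 := hsep t s
    have h2 := hle (y t)
    rw [← hy t, ← hx s, h] at h1
    omega
  have hwinj : Function.Injective w := by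
    intro s t h
    apply le_antisymm
    · rw [← hwb, h]
    · rw [← hwb, h]
  have hxinj : Function.Injective x := by
    intro s t h
    have : b (w s) = b (w t) := by rw [← hx, ← hx, h]
    apply le_antisymm
    · rw [← hwb, this]
    · rw [← hwb, this]
  have hyinj : Function.Injective y := by
    intro s t h
    have : a (w s) = a (w t) := by rw [← hy, ← hy, h]
    apply π.symm.injective
    apply le_antisymm
    · rw [← hwa, this]
    · rw [← hwa, this]
  have hAx : ∀ s t, G.Adj (w s) (x t) ↔ t ≤ s := by
    intro s t
    rw [hadj _ _ (hwx s t), hx, hwb]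
    have h1 := hsep s t
    have h2 := hle (x t)
    rw [hx] at h2
    exact ⟨fun h => h.2, fun h => ⟨by omega, h⟩⟩
  have hAy : ∀ s t, G.Adj (w s) (y t) ↔ π.symm t ≤ π.symm s := by
    intro s t
    rw [hadj _ _ (hwy s t), hy, hwa]
    have h1 := hsep t s
    have h2 := hle (y t)
    rw [hy] at h2
    exact ⟨fun h => h.1, fun h => ⟨h, by omega⟩⟩
  let e : (Fin p ⊕ Fin p ⊕ Fin p) ≃ Fin (Fintype.card (Fin p ⊕ Fin p ⊕ Fin p)) :=
    Fintype.equivFin _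
  let f0 : Fin p ⊕ Fin p ⊕ Fin p → Fin n := Sum.elim w (Sum.elim x y)
  have hf0 : Function.Injective f0 :=
    hwinj.sumElim (hxinj.sumElim hyinj hxy) (by
      rintro s (t | t)
      · exact hwx s t
      · exact hwy s t)
  let f : Fin (Fintype.card (Fin p ⊕ Fin p ⊕ Fin p)) ↪ Fin n :=
    ⟨f0 ∘ e.symm, hf0.comp e.symm.injective⟩
  refine ⟨_, G.comap f, ⟨f, fun u v => Iff.rfl⟩, ?_⟩
  let W : Fin p → Fin (Fintype.card (Fin p ⊕ Fin p ⊕ Fin p)) := fun s => e (Sum.inl s)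
  let X : Fin p → Fin (Fintype.card (Fin p ⊕ Fin p ⊕ Fin p)) := fun s => e (Sum.inr (Sum.inl s))
  let Y : Fin p → Fin (Fintype.card (Fin p ⊕ Fin p ⊕ Fin p)) := fun s => e (Sum.inr (Sum.inr s))
  have fW : ∀ s, f (W s) = w s := fun s => by simp [f, W, f0]
  have fX : ∀ s, f (X s) = x s := fun s => by simp [f, X, f0]
  have fY : ∀ s, f (Y s) = y s := fun s => by simp [f, Y, f0]
  have HX : ∀ s t, (G.comap f).Adj (W s) (X t) ↔ t ≤ s := by
    intro s t
    rw [SimpleGraph.comap_adj, fW, fX, hAx]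
  have HY : ∀ s t, (G.comap f).Adj (W s) (Y t) ↔ π.symm t ≤ π.symm s := by
    intro s t
    rw [SimpleGraph.comap_adj, fW, fY, hAy]
  have NX : ∀ s, (G.comap f).neighborSet (W s) ∩ Set.range X = X '' {t | t ≤ s} := by
    intro s
    ext z
    constructor
    · rintro ⟨h1, t, rfl⟩
      exact ⟨t, (HX s t).1 h1, rfl⟩
    · rintro ⟨t, ht, rfl⟩
      exact ⟨(HX s t).2 ht, t, rfl⟩
  have NY : ∀ s, (G.comap f).neighborSet (W s) ∩ Set.range Y
      = Y '' {t | π.symm t ≤ π.symm s} := by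
    intro s
    ext z
    constructor
    · rintro ⟨h1, t, rfl⟩
      exact ⟨t, (HY s t).1 h1, rfl⟩
    · rintro ⟨t, ht, rfl⟩
      exact ⟨(HY s t).2 ht, t, rfl⟩
  have iX : Function.Injective X := fun s t h => by simpa [X] using h
  have iY : Function.Injective Y := fun s t h => by simpa [Y] using h
  refine ⟨W, X, Y, fun s t h => by simpa [W] using h, iX, iY, ?_, ?_, ?_, ?_, ?_, ?_, ?_, ?_⟩
  · rw [Set.disjoint_left]; rintro _ ⟨s, rfl⟩ ⟨t, h⟩; simp [W, X] at h
  · rw [Set.disjoint_left]; rintro _ ⟨s, rfl⟩ ⟨t, h⟩; simp [W, Y] at h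
  · rw [Set.disjoint_left]; rintro _ ⟨s, rfl⟩ ⟨t, h⟩; simp [X, Y] at h
  · rw [Set.eq_univ_iff_forall]
    intro z
    obtain ⟨z, rfl⟩ := e.surjective z
    rcases z with z | z | z
    · exact Or.inl (Or.inl ⟨z, rfl⟩)
    · exact Or.inl (Or.inr ⟨z, rfl⟩)
    · exact Or.inr ⟨z, rfl⟩
  · intro i; rw [NX]; exact ⟨X i, i, le_refl i, rfl⟩
  · intro i; rw [NY]; exact ⟨Y i, i, le_refl (π.symm i), rfl⟩
  · intro i j hij
    rw [NX, NX]
    apply iX.image_strictMono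
    rw [Set.ssubset_iff_of_subset]
    · exact ⟨j, le_refl j, not_le.2 hij⟩
    · intro t ht; exact le_trans ht hij.le
  · intro i j hij
    rw [NY, NY]
    apply iY.image_strictMono
    rw [Set.ssubset_iff_of_subset]
    · refine ⟨π j, le_refl (π.symm (π j)), ?_⟩
      change ¬ (π.symm (π j) ≤ π.symm (π i))
      simpa using hij
    · intro t ht
      change π.symm t ≤ π.symm (π i) at ht
      change π.symm t ≤ π.symm (π j)
      rw [Equiv.symm_apply_apply] at *
      exact le_trans ht hij.le

end Rep

section Fwd
variable {V : Type}

theorem half_graph {p : ℕ} (H : SimpleGraph V) (u : Fin p → V) (S : Set V)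
    (hne : ∀ i, (H.neighborSet (u i) ∩ S).Nonempty)
    (hss : ∀ i j : Fin p, i < j → H.neighborSet (u i) ∩ S ⊂ H.neighborSet (u j) ∩ S) :
    ∃ x : Fin p → V, Function.Injective x ∧ ∀ i j, H.Adj (u j) (x i) ↔ i ≤ j := by
  have hmono : ∀ i j : Fin p, i ≤ j → H.neighborSet (u i) ∩ S ⊆ H.neighborSet (u j) ∩ S := by
    intro i j h
    rcases h.eq_or_lt with rfl | h
    · exact subset_rfl
    · exact (hss i j h).1
  have key : ∀ i : Fin p, ∃ z ∈ S, H.Adj (u i) z ∧ ∀ j < i, ¬ H.Adj (u j) z := by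
    intro i
    by_cases h0 : i.val = 0
    · obtain ⟨z, hz1, hz2⟩ := hne i
      exact ⟨z, hz2, hz1, fun j hj => by omega⟩
    · let i' : Fin p := ⟨i.val - 1, by omega⟩
      have hlt : i' < i := by rw [Fin.lt_def]; simp only [i']; omega
      obtain ⟨z, hz, hz'⟩ := Set.exists_of_ssubset (hss i' i hlt)
      refine ⟨z, hz.2, hz.1, fun j hj hadj => hz' (hmono j i' ?_ ⟨hadj, hz.2⟩)⟩
      rw [Fin.le_def]; simp only [i']; omega
  choose x hxS hx1 hx2 using key
  have hiff : ∀ i j, H.Adj (u j) (x i) ↔ i ≤ j := by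
    intro i j
    constructor
    · intro h
      by_contra hlt
      exact hx2 i j (not_le.1 hlt) h
    · intro h
      exact (hmono i j h ⟨hx1 i, hxS i⟩).1
  refine ⟨x, ?_, hiff⟩
  intro i i' h
  apply le_antisymm
  · rw [← hiff, h, hiff]
  · rw [← hiff, ← h, hiff]

variable [Fintype V] [DecidableEq V]

theorem red_cover {G : SimpleGraph V} {Q : Finpartition (univ : Finset V)} {t m : ℕ}
    {A : Finset V} (hA : redDegree G Q A ≤ t) (Z : Finset V)
    (hZ : ∀ z ∈ Z, (∃ x ∈ A, G.Adj x z) ∧ (∃ x ∈ A, ¬ G.Adj x z))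
    (hm : ∀ B ∈ Q.parts, (B ∩ Z).card ≤ m) (hAQ : A ∈ Q.parts) :
    Z.card ≤ (t + 1) * m := by
  classical
  let F := (Q.parts.erase A).filter fun B => ¬ IsHomog G A B
  have hF : F.card ≤ t := by
    refine le_trans (le_of_eq ?_) hA
    unfold redDegree
    simp only [F]
    congr
  have hsub : Z ⊆ (insert A F).biUnion (fun B => B ∩ Z) := by
    intro z hz
    obtain ⟨B, hB, hzB⟩ := Q.exists_mem (mem_univ z)
    refine mem_biUnion.2 ⟨B, ?_, mem_inter.2 ⟨hzB, hz⟩⟩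
    by_cases hBA : B = A
    · rw [hBA]; exact mem_insert_self _ _
    · refine mem_insert_of_mem (mem_filter.2 ⟨mem_erase.2 ⟨hBA, hB⟩, ?_⟩)
      obtain ⟨⟨x, hx, hxz⟩, ⟨y, hy, hyz⟩⟩ := hZ z hz
      rintro (h | h)
      · exact hyz (h y hy z hzB)
      · exact h x hx z hzB hxz
  have h1 := card_le_card hsub
  have h2 : ((insert A F).biUnion (fun B => B ∩ Z)).card ≤ (insert A F).card * m := by
    apply card_biUnion_le_card_mul
    intro B hB
    rcases mem_insert.1 hB with rfl | hB
    · exact hm _ hAQ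
    · exact hm B (mem_of_mem_erase (mem_filter.1 hB).1)
  have h3 := card_insert_le A F
  have h4 : (insert A F).card * m ≤ (t + 1) * m := Nat.mul_le_mul_right _ (by omega)
  omega

theorem window_u {p : ℕ} {G : SimpleGraph V} {Q : Finpartition (univ : Finset V)} {t m : ℕ}
    {u x : Fin p → V} (hx : Function.Injective x) (hadj : ∀ i j, G.Adj (u j) (x i) ↔ i ≤ j)
    {A : Finset V} (hAQ : A ∈ Q.parts) (hA : redDegree G Q A ≤ t)
    (hm : ∀ B ∈ Q.parts, (B ∩ univ.image x).card ≤ m)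
    {i j : Fin p} (hi : u i ∈ A) (hj : u j ∈ A) : (j : ℕ) ≤ i + (t + 1) * m := by
  have := red_cover hA ((Ioc i j).image x) (by
    intro z hz
    obtain ⟨l, hl, rfl⟩ := mem_image.1 hz
    rw [mem_Ioc] at hl
    refine ⟨⟨u j, hj, (hadj _ _).2 hl.2⟩, ⟨u i, hi, ?_⟩⟩
    rw [hadj]; exact not_le.2 hl.1) (m := m) (fun B hB =>
      le_trans (card_le_card (inter_subset_inter_left (image_subset_image (subset_univ _)))) (hm B hB)) hAQ
  rw [card_image_of_injective _ hx, Fin.card_Ioc] at this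
  omega

theorem window_x {p : ℕ} {G : SimpleGraph V} {Q : Finpartition (univ : Finset V)} {t m : ℕ}
    {u x : Fin p → V} (hu : Function.Injective u) (hadj : ∀ i j, G.Adj (u j) (x i) ↔ i ≤ j)
    {A : Finset V} (hAQ : A ∈ Q.parts) (hA : redDegree G Q A ≤ t)
    (hm : ∀ B ∈ Q.parts, (B ∩ univ.image u).card ≤ m)
    {i j : Fin p} (hi : x i ∈ A) (hj : x j ∈ A) : (j : ℕ) ≤ i + (t + 1) * m := by
  have := red_cover hA ((Ico i j).image u) (by
    intro z hz
    obtain ⟨l, hl, rfl⟩ := mem_image.1 hz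
    rw [mem_Ico] at hl
    refine ⟨⟨x i, hi, ((hadj _ _).2 hl.1).symm⟩, ⟨x j, hj, ?_⟩⟩
    rw [G.adj_comm, hadj]; exact not_le.2 hl.2) (m := m) (fun B hB =>
      le_trans (card_le_card (inter_subset_inter_left (image_subset_image (subset_univ _)))) (hm B hB)) hAQ
  rw [card_image_of_injective _ hu, Fin.card_Ico] at this
  omega

theorem size_x {p : ℕ} {G : SimpleGraph V} {Q : Finpartition (univ : Finset V)} {t m : ℕ}
    {u x : Fin p → V} (hu : Function.Injective u) (hadj : ∀ i j, G.Adj (u j) (x i) ↔ i ≤ j)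
    {A : Finset V} (hAQ : A ∈ Q.parts) (hA : redDegree G Q A ≤ t)
    (hm : ∀ B ∈ Q.parts, (B ∩ univ.image u).card ≤ m) :
    (A ∩ univ.image x).card ≤ (t + 1) * m + 1 := by
  let F : Finset (Fin p) := univ.filter (fun i => x i ∈ A)
  have h1 : A ∩ univ.image x ⊆ F.image x := by
    intro z hz
    obtain ⟨hz1, hz2⟩ := mem_inter.1 hz
    obtain ⟨i, _, rfl⟩ := mem_image.1 hz2
    exact mem_image_of_mem _ (mem_filter.2 ⟨mem_univ _, hz1⟩)
  have h2 : (A ∩ univ.image x).card ≤ F.card := (card_le_card h1).trans card_image_le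
  rcases F.eq_empty_or_nonempty with hF | hF
  · rw [hF] at h2; simp at h2; simp [h2]
  · have h3 : F ⊆ Icc (F.min' hF) (F.max' hF) := fun i hi =>
      mem_Icc.2 ⟨F.min'_le i hi, F.le_max' i hi⟩
    have h4 := card_le_card h3
    rw [Fin.card_Icc] at h4
    have h5 := window_x hu hadj hAQ hA hm (mem_filter.1 (F.min'_mem hF)).2
      (mem_filter.1 (F.max'_mem hF)).2
    omega

theorem chain_switch {α : Type} {R : α → α → Prop} {good : α → Prop} :
    ∀ (L : List α) (P₀ P₁ : α), List.IsChain R L → L.head? = some P₀ → L.getLast? = some P₁ →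
      good P₀ → ¬ good P₁ → ∃ P ∈ L, ∃ Q ∈ L, R P Q ∧ good P ∧ ¬ good Q := by
  intro L
  induction L with
  | nil => intro P₀ P₁ _ h; simp at h
  | cons a L ih =>
    intro P₀ P₁ hc hh hl hg hb
    simp only [List.head?_cons, Option.some.injEq] at hh
    subst hh
    cases L with
    | nil =>
      simp only [List.getLast?_singleton, Option.some.injEq] at hl
      subst hl
      exact absurd hg hb
    | cons c L =>
      rw [List.isChain_cons_cons] at hc
      by_cases hgc : good c
      · obtain ⟨P, hP, Q, hQ, h⟩ := ih c P₁ hc.2 rfl (by simpa using hl) hgc hb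
        exact ⟨P, List.mem_cons_of_mem _ hP, Q, List.mem_cons_of_mem _ hQ, h⟩
      · exact ⟨a, by simp, c, by simp, hc.1, hg, hgc⟩

theorem merge_size {P Q : Finpartition (univ : Finset V)} (h : IsMerge P Q) (S : Finset V) {m : ℕ}
    (hP : ∀ B ∈ P.parts, (B ∩ S).card ≤ m) : ∀ B ∈ Q.parts, (B ∩ S).card ≤ 2 * m := by
  obtain ⟨A, hA, B, hB, _, hQ⟩ := h
  intro C hC
  rw [hQ] at hC
  rcases mem_insert.1 hC with rfl | hC
  · rw [union_inter_distrib_right]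
    have h1 := card_union_le (A ∩ S) (B ∩ S)
    have h2 := hP A hA
    have h3 := hP B hB
    omega
  · simp only [mem_erase] at hC
    have := hP C hC.2.2
    omega

theorem not_tww_of_exposes {p t : ℕ} (hp : 2 ≤ p) (π : Equiv.Perm (Fin p))
    (hgap : ∀ i j : Fin p, (i : ℕ) ≤ j + (t + 1) * (2 * (2 * t + 4)) →
      (j : ℕ) ≤ i + (t + 1) * (2 * (2 * t + 4)) →
      (π.symm i : ℕ) ≤ π.symm j + (t + 1) * (2 * (2 * t + 4)) →
      (π.symm j : ℕ) ≤ π.symm i + (t + 1) * (2 * (2 * t + 4)) → i = j)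
    (G : SimpleGraph V) (hexp : Exposes G π) (htw : TwinWidthLE G t) : False := by
  obtain ⟨w, w₁, w₂, hw, -, -, -, -, -, -, hn1, hn2, hs1, hs2⟩ := hexp
  obtain ⟨x, hx, hax⟩ := half_graph G w (Set.range w₁) hn1 hs1
  obtain ⟨y, hy, hay⟩ := half_graph G (fun i => w (π i)) (Set.range w₂) (fun i => hn2 (π i)) hs2
  have hwπ : Function.Injective (fun i => w (π i)) := hw.comp π.injective
  obtain ⟨L, ⟨P₀, hP₀, hP₀'⟩, ⟨P₁, hP₁, hP₁'⟩, hch, hred⟩ := htw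
  have himg : univ.image (fun i => w (π i)) = univ.image w := by
    ext z
    simp only [mem_image, mem_univ, true_and]
    constructor
    · rintro ⟨i, rfl⟩; exact ⟨_, rfl⟩
    · rintro ⟨i, rfl⟩; exact ⟨π.symm i, by simp⟩
  obtain ⟨P, hPL, Q, hQL, hPQ, hgP, hgQ⟩ := chain_switch
    (good := fun P : Finpartition (univ : Finset V) => ∀ A ∈ P.parts,
      (A ∩ univ.image w).card ≤ 1 ∧ (A ∩ univ.image x).card ≤ 2 * t + 4 ∧
      (A ∩ univ.image y).card ≤ 2 * t + 4) L P₀ P₁ hch hP₀ hP₁ (by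
      intro A hA
      have h1 := hP₀' A hA
      have h := fun S : Finset V => card_le_card (inter_subset_left (s₁ := A) (s₂ := S))
      have h2 := h (univ.image w)
      have h3 := h (univ.image x)
      have h4 := h (univ.image y)
      refine ⟨?_, ?_, ?_⟩ <;> omega) (by
      intro hgood
      let i0 : Fin p := ⟨0, by omega⟩
      let i1 : Fin p := ⟨1, by omega⟩
      obtain ⟨A, hA, h0⟩ := P₁.exists_mem (mem_univ (w i0))
      obtain ⟨B, hB, h1⟩ := P₁.exists_mem (mem_univ (w i1))
      rw [card_le_one] at hP₁'
      have hAB := hP₁' A hA B hB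
      subst hAB
      have h2 := (hgood A hA).1
      rw [card_le_one] at h2
      have h3 := h2 (w i0) (by simp [h0]) (w i1) (by simp [h1])
      have h4 := hw h3
      simp [i0, i1] at h4)
  have mW := merge_size hPQ (univ.image w) (fun B hB => (hgP B hB).1)
  have mX := merge_size hPQ (univ.image x) (fun B hB => (hgP B hB).2.1)
  have mY := merge_size hPQ (univ.image y) (fun B hB => (hgP B hB).2.2)
  apply hgQ
  intro A hA
  have hrA := hred Q hQL A hA
  refine ⟨?_, ?_, ?_⟩
  · rw [card_le_one]
    intro z hz z' hz'
    obtain ⟨hzA, hz⟩ := mem_inter.1 hz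
    obtain ⟨hzA', hz'⟩ := mem_inter.1 hz'
    obtain ⟨i, _, rfl⟩ := mem_image.1 hz
    obtain ⟨j, _, rfl⟩ := mem_image.1 hz'
    congr 1
    have e1 : (fun i => w (π i)) (π.symm i) ∈ A := by simpa using hzA
    have e2 : (fun i => w (π i)) (π.symm j) ∈ A := by simpa using hzA'
    exact hgap i j (window_u hx hax hA hrA mX hzA' hzA) (window_u hx hax hA hrA mX hzA hzA')
      (window_u hy hay hA hrA mY e2 e1) (window_u hy hay hA hrA mY e1 e2)
  · have := size_x hw hax hA hrA mW
    omega
  · have := size_x hwπ hay hA hrA (by rw [himg]; exact mW)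
    omega

theorem exists_gap_perm (L : ℕ) : ∃ p : ℕ, 2 ≤ p ∧ ∃ π : Equiv.Perm (Fin p),
    ∀ i j : Fin p, (i : ℕ) ≤ j + L → (j : ℕ) ≤ i + L →
      (π.symm i : ℕ) ≤ π.symm j + L → (π.symm j : ℕ) ≤ π.symm i + L → i = j := by
  let k := L + 2
  let e : Fin k × Fin k ≃ Fin (k * k) := finProdFinEquiv
  refine ⟨k * k, by simp only [k]; nlinarith,
    (e.symm.trans ((Equiv.prodComm _ _).trans e)), ?_⟩
  intro i j h1 h2 h3 h4
  obtain ⟨⟨a, b⟩, rfl⟩ := e.surjective i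
  obtain ⟨⟨c, d⟩, rfl⟩ := e.surjective j
  have ev : ∀ s t : Fin k, (e (s, t) : ℕ) = t + k * s := fun s t => rfl
  simp only [Equiv.symm_trans_apply, Equiv.symm_symm, Equiv.symm_apply_apply,
    Equiv.prodComm_symm, Equiv.prodComm_apply, Prod.swap_prod_mk, ev] at h1 h2 h3 h4
  have ha := a.isLt
  have hb := b.isLt
  have hc := c.isLt
  have hd := d.isLt
  have hk : k = L + 2 := rfl
  suffices (a : ℕ) = c ∧ (b : ℕ) = d by
    rw [Fin.ext this.1, Fin.ext this.2]
  generalize (a : ℕ) = a at *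
  generalize (b : ℕ) = b at *
  generalize (c : ℕ) = c at *
  generalize (d : ℕ) = d at *
  clear_value k
  rcases lt_trichotomy a c with h | h | h <;> rcases lt_trichotomy b d with h' | h' | h'
  all_goals first
    | exact ⟨h, h'⟩
    | (exfalso; nlinarith)

end Fwd

/-- A hereditary class of interval graphs has bounded twin-width iff for some
permutation `π` it contains no graph exposing `π`. -/
theorem stmt2 (C : ∀ n : ℕ, Set (SimpleGraph (Fin n)))
    (hher : Hereditary C)
    (hint : ∀ n : ℕ, ∀ G ∈ C n, IsIntervalGraph G) :
    (∃ t : ℕ, ∀ n : ℕ, ∀ G ∈ C n, TwinWidthLE G t) ↔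
      (∃ p : ℕ, 1 ≤ p ∧ ∃ π : Equiv.Perm (Fin p),
        ∀ n : ℕ, ∀ G ∈ C n, ¬ Exposes G π) := by
  constructor
  · rintro ⟨t, ht⟩
    obtain ⟨p, hp, π, hgap⟩ := exists_gap_perm ((t + 1) * (2 * (2 * t + 4)))
    refine ⟨p, by omega, π, ?_⟩
    intro n G hG hexp
    exact not_tww_of_exposes hp π hgap G hexp (ht n G hG)
  · rintro ⟨p, hp, π, hπ⟩
    obtain ⟨C', hC'⟩ := marcus_tardos p
    refine ⟨4 * (2 * (6 * C') + 1), ?_⟩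
    intro n G hG
    obtain ⟨q, a, b, hq, hle, hadj, ha, hb⟩ := exists_tight_rep (hint n G hG)
    refine tww_of_rep hC' G q a b hq hadj hle ?_
    intro hg
    obtain ⟨m, H, hH, hexp⟩ := expose_of_grid hq hle hadj ha hb hg π
    exact hπ m H (hher m n H G hG hH) hexp
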